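/- Let K ⊆ [0,1]^d be an F_σ set, σ > 0, and h : [0,1]^d → ℝ a Lipschitz function satisfying limsup_{ε→0} Υ(h,z,ε) ≥ σ for all z ∈ K. Then for the typical g ∈ Lip₁([0,1]^d) one has limsup_{ε→0} Υ(h+g,z,ε) ≥ σ for all z ∈ K. -/

import Mathlib

/-!
The proof is a Baire category argument, based on two observations about a pair of segments through
`z` that witnesses `Υ(f,z,ε) > c`.

* Openness (`eventually_wit`): having a witness is an open condition on `(g, z)`. To move from `z`
  to a nearby point `z'` of the cube without leaving the cube, apply to both segments a homothety
  of ratio `1 - l` whose centre lies in the cube and which sends `z` to `z'`. Such a centre exists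
  for `z'` close to `z` because the cube is a polytope. The direction of the segments is unchanged
  and the difference quotients change little when `l` and `z' - z` are small. By compactness, the
  set of `g` admitting witnesses at all points of a compact set `F` is open.
* Density (`exists_smooth_near`, `Wit.add_smooth`): the `C¹` functions are dense in `Lip₁`, by
  mollification. A `C¹` function is strictly differentiable, so its difference quotients over short
  segments through `z` in a common direction nearly agree; adding it to `h` hardly affects the
  witnesses for `h` at small scales.

Since `Υ` is monotone in `ε`, the limsup is at least `σ` if and only if there are witnesses for
every `c < σ` at every scale (`le_limsup_iff_wit`), and it suffices to let `c`, `ε` and the closed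
pieces of `K` range over countable families.
-/

open MeasureTheory Filter Metric Set Topology RealInnerProductSpace

noncomputable section

/-- The unit cube `[0,1]^d`. -/
def cube (d : ℕ) : Set (EuclideanSpace ℝ (Fin d)) := {x | ∀ i, x i ∈ Set.Icc (0:ℝ) 1}

open Classical in
/-- Extension by `0` of a function defined on the unit cube. -/
def extC {d : ℕ} (f : cube d → ℝ) : EuclideanSpace ℝ (Fin d) → ℝ :=
  fun y => if h : y ∈ cube d then f ⟨y, h⟩ else 0

/-- The quantity `ζ(f,z,ε,e)` for a function `f` on `[0,1]^d`: the supremum of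
`|(f(x+te)−f(x))/t − (f(y+se)−f(y))/s|` over all segments `[x,x+te]`, `[y,y+se]`
contained in `[0,1]^d`, containing `z`, with `s,t ∈ [−ε,ε] ∖ {0}`. -/
def zetaC {d : ℕ} (f : cube d → ℝ) (z : EuclideanSpace ℝ (Fin d)) (ε : ℝ)
    (e : EuclideanSpace ℝ (Fin d)) : ℝ :=
  sSup {r : ℝ | ∃ x y : EuclideanSpace ℝ (Fin d), ∃ s t : ℝ,
    s ∈ Set.Icc (-ε) ε ∧ t ∈ Set.Icc (-ε) ε ∧ s ≠ 0 ∧ t ≠ 0 ∧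
    segment ℝ x (x + t • e) ⊆ cube d ∧ segment ℝ y (y + s • e) ⊆ cube d ∧
    z ∈ segment ℝ x (x + t • e) ∧ z ∈ segment ℝ y (y + s • e) ∧
    r = |(extC f (x + t • e) - extC f x) / t - (extC f (y + s • e) - extC f y) / s|}

/-- The quantity `Υ(f,z,ε) = sup_{e ∈ S^{d−1}} ζ(f,z,ε,e)` for a function on `[0,1]^d`. -/
def UpsC {d : ℕ} (f : cube d → ℝ) (z : EuclideanSpace ℝ (Fin d)) (ε : ℝ) : ℝ :=
  sSup {r : ℝ | ∃ e ∈ sphere (0 : EuclideanSpace ℝ (Fin d)) 1, r = zetaC f z ε e}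

/-! ### The cube -/

theorem isCompact_cube (d : ℕ) : IsCompact (cube d) := by
  have h1 : IsCompact (Set.univ.pi fun _ : Fin d => Set.Icc (0:ℝ) 1) :=
    isCompact_univ_pi fun _ => isCompact_Icc
  have h2 := h1.image (PiLp.continuous_toLp 2 (fun _ : Fin d => ℝ))
  convert h2 using 1
  ext x
  simp only [cube, Set.mem_ofPred_eq, Set.mem_image, Set.mem_pi, Set.mem_univ, true_implies]
  constructor
  · intro hx
    exact ⟨fun i => x i, hx, rfl⟩
  · rintro ⟨y, hy, rfl⟩
    exact hy

theorem convex_cube (d : ℕ) : Convex ℝ (cube d) := by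
  intro x hx y hy a b ha hb hab i
  have := convex_Icc (0:ℝ) 1 (hx i) (hy i) ha hb hab
  simpa using this

/-- The coordinatewise retraction of `ℝ^d` onto the cube. -/
def clampC {d : ℕ} (x : EuclideanSpace ℝ (Fin d)) : cube d :=
  ⟨WithLp.toLp 2 fun i => max 0 (min 1 (x i)), fun i => by simp⟩

theorem continuous_clampC {d : ℕ} : Continuous (clampC (d := d)) := by
  unfold clampC
  refine Continuous.subtype_mk ?_ _
  refine (PiLp.continuous_toLp 2 (fun _ : Fin d => ℝ)).comp ?_
  fun_prop

theorem extC_eq_clampC {d : ℕ} (f : cube d → ℝ) {x : EuclideanSpace ℝ (Fin d)}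
    (hx : x ∈ cube d) : extC f x = f (clampC x) := by
  unfold extC
  rw [dif_pos hx]
  congr 1
  apply Subtype.ext
  ext i
  simp [clampC, (hx i).1, (hx i).2]

/-! ### Admissible segments and witnesses -/

/-- `[x, x + te]` is one of the segments admitted in the definition of `ζ(f,z,ε,e)`: it contains
`z`, lies in the cube and has `t ∈ [-ε,ε] ∖ {0}`. By convexity only the endpoints are required to
lie in the cube. -/
structure Adm {d : ℕ} (z : EuclideanSpace ℝ (Fin d)) (ε : ℝ) (e x : EuclideanSpace ℝ (Fin d))
    (t : ℝ) : Prop where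
  mem : t ∈ Set.Icc (-ε) ε
  ne : t ≠ 0
  left : x ∈ cube d
  right : x + t • e ∈ cube d
  seg : z ∈ segment ℝ x (x + t • e)

/-- The difference quotient of `f` over `[x, x + te]`. -/
def quot {d : ℕ} (f : cube d → ℝ) (e x : EuclideanSpace ℝ (Fin d)) (t : ℝ) : ℝ :=
  (extC f (x + t • e) - extC f x) / t

theorem Adm.mono {d : ℕ} {z : EuclideanSpace ℝ (Fin d)} {ε ε' : ℝ}
    {e x : EuclideanSpace ℝ (Fin d)} {t : ℝ} (h : Adm z ε e x t) (hε : ε ≤ ε') :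
    Adm z ε' e x t :=
  ⟨⟨by linarith [h.mem.1], h.mem.2.trans hε⟩, h.ne, h.left, h.right, h.seg⟩

theorem zetaC_eq {d : ℕ} (f : cube d → ℝ) (z : EuclideanSpace ℝ (Fin d)) (ε : ℝ)
    (e : EuclideanSpace ℝ (Fin d)) :
    zetaC f z ε e = sSup {r : ℝ | ∃ x y s t, Adm z ε e x t ∧ Adm z ε e y s ∧
      r = |quot f e x t - quot f e y s|} := by
  unfold zetaC
  congr 1
  ext r
  constructor
  · rintro ⟨x, y, s, t, hs, ht, hs0, ht0, hx, hy, hzx, hzy, hr⟩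
    exact ⟨x, y, s, t, ⟨ht, ht0, hx (left_mem_segment ..), hx (right_mem_segment ..), hzx⟩,
      ⟨hs, hs0, hy (left_mem_segment ..), hy (right_mem_segment ..), hzy⟩, hr⟩
  · rintro ⟨x, y, s, t, hx, hy, hr⟩
    exact ⟨x, y, s, t, hy.mem, hx.mem, hy.ne, hx.ne,
      (convex_cube d).segment_subset hx.left hx.right,
      (convex_cube d).segment_subset hy.left hy.right, hx.seg, hy.seg, hr⟩

theorem abs_quot_le {d : ℕ} {f : cube d → ℝ} {M : NNReal} (hf : LipschitzWith M f)
    {z : EuclideanSpace ℝ (Fin d)} {ε : ℝ} {e x : EuclideanSpace ℝ (Fin d)} {t : ℝ}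
    (he : e ∈ sphere (0 : EuclideanSpace ℝ (Fin d)) 1) (h : Adm z ε e x t) :
    |quot f e x t| ≤ M := by
  have h1 := hf.dist_le_mul ⟨x + t • e, h.right⟩ ⟨x, h.left⟩
  have he' : ‖e‖ = 1 := by simpa using he
  rw [Subtype.dist_eq, dist_eq_norm, dist_eq_norm] at h1
  simp only [add_sub_cancel_left, norm_smul, he', mul_one, Real.norm_eq_abs] at h1
  unfold quot extC
  rw [dif_pos h.left, dif_pos h.right, abs_div]
  exact div_le_of_le_mul₀ (abs_nonneg _) M.2 h1

theorem abs_quot_sub_le {d : ℕ} {f : cube d → ℝ} {M : NNReal} (hf : LipschitzWith M f)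
    {z : EuclideanSpace ℝ (Fin d)} {ε : ℝ} {e x y : EuclideanSpace ℝ (Fin d)} {s t : ℝ}
    (he : e ∈ sphere (0 : EuclideanSpace ℝ (Fin d)) 1) (hx : Adm z ε e x t) (hy : Adm z ε e y s) :
    |quot f e x t - quot f e y s| ≤ 2 * M := by
  have := abs_sub (quot f e x t) (quot f e y s)
  linarith [abs_quot_le hf he hx, abs_quot_le hf he hy]

theorem zetaC_le {d : ℕ} {f : cube d → ℝ} {M : NNReal} (hf : LipschitzWith M f)
    (z : EuclideanSpace ℝ (Fin d)) (ε : ℝ) {e : EuclideanSpace ℝ (Fin d)}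
    (he : e ∈ sphere (0 : EuclideanSpace ℝ (Fin d)) 1) : zetaC f z ε e ≤ 2 * M := by
  rw [zetaC_eq]
  refine Real.sSup_le ?_ (by positivity)
  rintro r ⟨x, y, s, t, hx, hy, rfl⟩
  exact abs_quot_sub_le hf he hx hy

theorem UpsC_le {d : ℕ} {f : cube d → ℝ} {M : NNReal} (hf : LipschitzWith M f)
    (z : EuclideanSpace ℝ (Fin d)) (ε : ℝ) : UpsC f z ε ≤ 2 * M := by
  refine Real.sSup_le ?_ (by positivity)
  rintro r ⟨e, he, rfl⟩
  exact zetaC_le hf z ε he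

theorem UpsC_nonneg {d : ℕ} (f : cube d → ℝ) (z : EuclideanSpace ℝ (Fin d)) (ε : ℝ) :
    0 ≤ UpsC f z ε := by
  refine Real.sSup_nonneg ?_
  rintro r ⟨e, he, rfl⟩
  refine Real.sSup_nonneg ?_
  rintro r ⟨x, y, s, t, -, -, -, -, -, -, -, -, rfl⟩
  exact abs_nonneg _

/-- Some pair of admissible segments of length at most `ε` through `z` witnesses
`Υ(f,z,ε) > c`. -/
def Wit {d : ℕ} (f : cube d → ℝ) (z : EuclideanSpace ℝ (Fin d)) (ε c : ℝ) : Prop :=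
  ∃ e ∈ sphere (0 : EuclideanSpace ℝ (Fin d)) 1, ∃ x y s t, Adm z ε e x t ∧ Adm z ε e y s ∧
    c < |quot f e x t - quot f e y s|

theorem Wit.lt_UpsC {d : ℕ} {f : cube d → ℝ} {M : NNReal} (hf : LipschitzWith M f)
    {z : EuclideanSpace ℝ (Fin d)} {ε c : ℝ} (h : Wit f z ε c) : c < UpsC f z ε := by
  obtain ⟨e, he, x, y, s, t, hx, hy, hc⟩ := h
  have h1 : |quot f e x t - quot f e y s| ≤ zetaC f z ε e := by
    rw [zetaC_eq]
    refine le_csSup ⟨2 * M, ?_⟩ ⟨x, y, s, t, hx, hy, rfl⟩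
    rintro r ⟨x, y, s, t, hx, hy, rfl⟩
    exact abs_quot_sub_le hf he hx hy
  have h2 : zetaC f z ε e ≤ UpsC f z ε := by
    refine le_csSup ⟨2 * M, ?_⟩ ⟨e, he, rfl⟩
    rintro r ⟨e, he, rfl⟩
    exact zetaC_le hf z ε he
  linarith

/-- The hypothesis `0 ≤ c` excludes the junk value `sSup ∅ = 0`. -/
theorem wit_of_lt_UpsC {d : ℕ} {f : cube d → ℝ} {z : EuclideanSpace ℝ (Fin d)} {ε c : ℝ}
    (hc : 0 ≤ c) (h : c < UpsC f z ε) : Wit f z ε c := by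
  by_contra hW
  refine absurd h (not_lt.2 (Real.sSup_le ?_ hc))
  rintro r ⟨e, he, rfl⟩
  rw [zetaC_eq]
  refine Real.sSup_le ?_ hc
  rintro r ⟨x, y, s, t, hx, hy, rfl⟩
  exact not_lt.1 fun hlt => hW ⟨e, he, x, y, s, t, hx, hy, hlt⟩

/-- Since `Υ(f,z,·)` is monotone, its limsup at `0` is at least `σ` exactly when every value
`c ∈ (0,σ)` is exceeded at every scale. -/
theorem le_limsup_iff_wit {d : ℕ} {f : cube d → ℝ} {M : NNReal} (hf : LipschitzWith M f)
    {z : EuclideanSpace ℝ (Fin d)} {σ : ℝ} :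
    σ ≤ Filter.limsup (fun ε => UpsC f z ε) (𝓝[>] (0:ℝ)) ↔
      ∀ ε > 0, ∀ c, 0 < c → c < σ → Wit f z ε c := by
  have hcob : IsCoboundedUnder (· ≤ ·) (𝓝[>] (0:ℝ)) (fun ε => UpsC f z ε) :=
    IsBoundedUnder.isCoboundedUnder_le
      (isBoundedUnder_of ⟨0, fun ε => UpsC_nonneg f z ε⟩)
  have hbd : IsBoundedUnder (· ≤ ·) (𝓝[>] (0:ℝ)) (fun ε => UpsC f z ε) :=
    isBoundedUnder_of ⟨2 * M, fun ε => UpsC_le hf z ε⟩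
  constructor
  · intro h ε hε c hc hcσ
    have hfr := frequently_lt_of_lt_limsup hcob (hcσ.trans_le h)
    obtain ⟨ε', hlt, hε'⟩ := (hfr.and_eventually (Ioo_mem_nhdsGT hε)).exists
    obtain ⟨e, he, x, y, s, t, hx, hy, hc⟩ := wit_of_lt_UpsC hc.le hlt
    exact ⟨e, he, x, y, s, t, hx.mono hε'.2.le, hy.mono hε'.2.le, hc⟩
  · intro h
    refine le_of_forall_lt_imp_le_of_dense fun c hc => ?_
    rcases le_or_gt c 0 with hc0 | hc0
    · refine hc0.trans (le_limsup_of_frequently_le (Eventually.frequently ?_) hbd)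
      exact Eventually.of_forall fun ε => UpsC_nonneg f z ε
    · refine le_limsup_of_frequently_le (Eventually.frequently ?_) hbd
      filter_upwards [self_mem_nhdsWithin] with ε hε
      exact ((h ε hε c hc0 hc).lt_UpsC hf).le

/-! ### Openness -/

/-- Homotheties with centre `w` in the cube carry segments admissible at `z` to segments
admissible at `z'`; here `w` is determined by `z' = (1 - l) z + l w`. -/
theorem Adm.shift {d : ℕ} {z z' : EuclideanSpace ℝ (Fin d)} {ε l : ℝ}
    {e x : EuclideanSpace ℝ (Fin d)} {t : ℝ} (h : Adm z ε e x t) (hl : 0 < l) (hl1 : l < 1)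
    (hw : z + l⁻¹ • (z' - z) ∈ cube d) :
    Adm z' ε e (x + l • (z - x) + (z' - z)) ((1 - l) * t) := by
  have key : ∀ p, p + l • (z - p) + (z' - z) = (1 - l) • p + l • (z + l⁻¹ • (z' - z)) := by
    intro p
    rw [smul_add, smul_smul, mul_inv_cancel₀ hl.ne']
    module
  have keyR : x + l • (z - x) + (z' - z) + ((1 - l) * t) • e =
      (x + t • e) + l • (z - (x + t • e)) + (z' - z) := by module
  have hc : ∀ p ∈ cube d, p + l • (z - p) + (z' - z) ∈ cube d := by
    intro p hp
    rw [key]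
    exact convex_cube d hp hw (by linarith) hl.le (by ring)
  refine ⟨?_, mul_ne_zero (by linarith) h.ne, hc _ h.left, ?_, ?_⟩
  · rw [Set.mem_Icc, ← abs_le, abs_mul, abs_of_pos (by linarith : 0 < 1 - l)]
    have := abs_le.2 h.mem
    nlinarith [abs_nonneg t]
  · rw [keyR]
    exact hc _ h.right
  · obtain ⟨a, b, ha, hb, hab, hz⟩ := h.seg
    refine ⟨a, b, ha, hb, hab, ?_⟩
    have ha' : a = 1 - b := by linarith
    subst ha'
    have hz2 : z - x = (b * t) • e := by rw [← hz]; module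
    have hx : x = z - (b * t) • e := by rw [← hz2]; abel
    rw [hx]
    module

/-- Because the cube is a polytope, its tangent cone at `z` agrees with the cube near `z`:
dilating points `z'` of the cube about `z` by the fixed factor `1/l` stays inside it once `z'` is
close enough to `z`. -/
theorem eventually_dilate_mem_cube {d : ℕ} {z : EuclideanSpace ℝ (Fin d)} (hz : z ∈ cube d)
    {l : ℝ} (hl : 0 < l) :
    ∀ᶠ z' in 𝓝 z, z' ∈ cube d → z + l⁻¹ • (z' - z) ∈ cube d := by
  have hi : ∀ i, ∀ᶠ z' in 𝓝 z, z' ∈ cube d → (z + l⁻¹ • (z' - z)) i ∈ Set.Icc (0:ℝ) 1 := by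
    intro i
    have hcont : Tendsto (fun z' : EuclideanSpace ℝ (Fin d) => (z + l⁻¹ • (z' - z)) i) (𝓝 z)
        (𝓝 (z i)) := by
      have : Continuous fun z' : EuclideanSpace ℝ (Fin d) => (z + l⁻¹ • (z' - z)) i := by
        fun_prop
      simpa using this.tendsto z
    have hlow : ∀ᶠ z' in 𝓝 z, z' ∈ cube d → 0 ≤ (z + l⁻¹ • (z' - z)) i := by
      rcases (hz i).1.eq_or_lt with h0 | h0
      · refine Eventually.of_forall fun z' hz' => ?_
        have := (hz' i).1
        simp only [PiLp.add_apply, PiLp.smul_apply, PiLp.sub_apply, ← h0, smul_eq_mul]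
        have := mul_nonneg (inv_nonneg.2 hl.le) this
        linarith
      · filter_upwards [hcont.eventually (lt_mem_nhds h0)] with z' h _ using h.le
    have hup : ∀ᶠ z' in 𝓝 z, z' ∈ cube d → (z + l⁻¹ • (z' - z)) i ≤ 1 := by
      rcases (hz i).2.eq_or_lt with h0 | h0
      · refine Eventually.of_forall fun z' hz' => ?_
        have := (hz' i).2
        simp only [PiLp.add_apply, PiLp.smul_apply, PiLp.sub_apply, h0, smul_eq_mul]
        have := mul_nonneg (inv_nonneg.2 hl.le) (sub_nonneg.2 this)
        linarith
      · filter_upwards [hcont.eventually (gt_mem_nhds h0)] with z' h _ using h.le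
    filter_upwards [hlow, hup] with z' h1 h2 h3 using ⟨h1 h3, h2 h3⟩
  filter_upwards [eventually_all.2 hi] with z' h hz' i using h i hz'

/-- For fixed `h`, having a witness for `h + g` at `z` is an open condition on `(g, z)`: shrinking the two segments
slightly towards `z` gives room to translate them so that they pass through a nearby `z'`. -/
theorem eventually_wit {d : ℕ} {h : cube d → ℝ} (hc : Continuous h)
    (g₀ : {g : C(cube d, ℝ) // LipschitzWith 1 ⇑g}) {z : EuclideanSpace ℝ (Fin d)}
    (hz : z ∈ cube d) {ε c : ℝ} (hW : Wit (fun w => h w + g₀.1 w) z ε c) :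
    ∀ᶠ p in 𝓝 (g₀, z), p.2 ∈ cube d → Wit (fun w => h w + p.1.1 w) p.2 ε c := by
  have : CompactSpace (cube d) := isCompact_iff_compactSpace.1 (isCompact_cube d)
  obtain ⟨e, he, x, y, s, t, hx, hy, hlt⟩ := hW
  -- the difference quotient over the shrunken translated segment; precomposing with `clampC`
  -- makes it continuous in all variables, including where the segment leaves the cube
  let q : EuclideanSpace ℝ (Fin d) → ℝ → ℝ ×
      ({g : C(cube d, ℝ) // LipschitzWith 1 ⇑g} × EuclideanSpace ℝ (Fin d)) → ℝ := fun x t v =>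
    ((h (clampC (x + v.1 • (z - x) + (v.2.2 - z) + ((1 - v.1) * t) • e)) +
      v.2.1.1 (clampC (x + v.1 • (z - x) + (v.2.2 - z) + ((1 - v.1) * t) • e))) -
     (h (clampC (x + v.1 • (z - x) + (v.2.2 - z))) +
      v.2.1.1 (clampC (x + v.1 • (z - x) + (v.2.2 - z))))) / ((1 - v.1) * t)
  have hq : ∀ x t, t ≠ 0 → ContinuousAt (q x t) (0, (g₀, z)) := by
    intro x t ht
    have hA : Continuous fun v : ℝ × ({g : C(cube d, ℝ) // LipschitzWith 1 ⇑g} ×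
        EuclideanSpace ℝ (Fin d)) => clampC (x + v.1 • (z - x) + (v.2.2 - z)) :=
      continuous_clampC.comp (by fun_prop)
    have hB : Continuous fun v : ℝ × ({g : C(cube d, ℝ) // LipschitzWith 1 ⇑g} ×
        EuclideanSpace ℝ (Fin d)) =>
        clampC (x + v.1 • (z - x) + (v.2.2 - z) + ((1 - v.1) * t) • e) :=
      continuous_clampC.comp (by fun_prop)
    have hG : Continuous fun v : ℝ × ({g : C(cube d, ℝ) // LipschitzWith 1 ⇑g} ×
        EuclideanSpace ℝ (Fin d)) => v.2.1.1 := by fun_prop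
    refine ContinuousAt.div (Continuous.continuousAt ?_) (by fun_prop) (by simpa using ht)
    exact ((hc.comp hB).add (hG.eval hB)).sub ((hc.comp hA).add (hG.eval hA))
  have hq0 : ∀ x t, Adm z ε e x t → q x t (0, (g₀, z)) = quot (fun w => h w + g₀.1 w) e x t := by
    intro x t hx
    simp only [q, quot, extC_eq_clampC _ hx.left, extC_eq_clampC _ hx.right]
    simp
  have hev : ∀ᶠ v in 𝓝 ((0:ℝ), (g₀, z)), c < |q x t v - q y s v| := by
    refine (((hq x t hx.ne).sub (hq y s hy.ne)).abs).eventually (lt_mem_nhds ?_)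
    simpa only [Pi.sub_apply, hq0 x t hx, hq0 y s hy] using hlt
  rw [nhds_prod_eq] at hev
  have hev2 : ∀ᶠ l in 𝓝[>] (0:ℝ), ∀ᶠ p in 𝓝 (g₀, z), c < |q x t (l, p) - q y s (l, p)| :=
    hev.curry.filter_mono nhdsWithin_le_nhds
  obtain ⟨l, hl, hl0, hl1⟩ := (hev2.and (Ioo_mem_nhdsGT (zero_lt_one' ℝ))).exists
  have hdil : ∀ᶠ p in 𝓝 (g₀, z), p.2 ∈ cube d → z + l⁻¹ • (p.2 - z) ∈ cube d :=
    (continuous_snd.tendsto (g₀, z)).eventually (eventually_dilate_mem_cube hz hl0)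
  filter_upwards [hl, hdil] with p hp hw hpc
  have hx' := hx.shift hl0 hl1 (hw hpc)
  have hy' := hy.shift hl0 hl1 (hw hpc)
  refine ⟨e, he, _, _, _, _, hx', hy', ?_⟩
  simpa only [q, quot, extC_eq_clampC _ hx'.left, extC_eq_clampC _ hx'.right,
    extC_eq_clampC _ hy'.left, extC_eq_clampC _ hy'.right] using hp

/-! ### Density -/

open scoped Convolution in
/-- Mollification of a `1`-Lipschitz extension. -/
theorem exists_smooth_near {d : ℕ} {g : cube d → ℝ} (hg : LipschitzWith 1 g) {δ : ℝ}
    (hδ : 0 < δ) : ∃ G : EuclideanSpace ℝ (Fin d) → ℝ, ContDiff ℝ 1 G ∧ LipschitzWith 1 G ∧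
      ∀ x : cube d, |G x - g x| ≤ δ := by
  have hext : LipschitzOnWith 1 (extC g) (cube d) := by
    refine LipschitzOnWith.of_dist_le_mul fun x hx y hy => ?_
    unfold extC
    rw [dif_pos hx, dif_pos hy]
    exact hg.dist_le_mul ⟨x, hx⟩ ⟨y, hy⟩
  obtain ⟨G₀, hG₀, hG₀e⟩ := hext.extend_real
  let φ : ContDiffBump (0 : EuclideanSpace ℝ (Fin d)) := ⟨δ / 2, δ, by linarith, by linarith⟩
  have hi : ∀ x, Integrable (fun u => φ.normed volume u * G₀ (x - u)) volume := by
    intro x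
    refine Continuous.integrable_of_hasCompactSupport ?_ ?_
    · exact φ.continuous_normed.mul (hG₀.continuous.comp (by fun_prop))
    · exact φ.hasCompactSupport_normed.mul_right
  refine ⟨φ.normed volume ⋆[ContinuousLinearMap.lsmul ℝ ℝ, volume] G₀, ?_, ?_, ?_⟩
  · exact φ.hasCompactSupport_normed.contDiff_convolution_left _ φ.contDiff_normed
      hG₀.continuous.locallyIntegrable
  · refine LipschitzWith.of_dist_le_mul fun x y => ?_
    simp only [convolution, ContinuousLinearMap.lsmul_apply, smul_eq_mul, NNReal.coe_one, one_mul]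
    rw [dist_eq_norm, ← integral_sub (hi x) (hi y)]
    calc ‖∫ u, (φ.normed volume u * G₀ (x - u) - φ.normed volume u * G₀ (y - u))‖
        ≤ ∫ u, φ.normed volume u * dist x y := by
          refine norm_integral_le_of_norm_le (φ.integrable_normed.mul_const _)
            (Eventually.of_forall fun u => ?_)
          rw [← mul_sub, norm_mul, Real.norm_of_nonneg (φ.nonneg_normed u), ← dist_eq_norm]
          refine mul_le_mul_of_nonneg_left ?_ (φ.nonneg_normed u)
          simpa using hG₀.dist_le_mul (x - u) (y - u)
      _ = dist x y := by rw [integral_mul_const, φ.integral_normed, one_mul]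
  · intro x
    have h1 : G₀ x = g x := by
      rw [← hG₀e x.2]
      unfold extC
      rw [dif_pos x.2]
    rw [← h1, ← Real.dist_eq]
    refine φ.dist_normed_convolution_le hG₀.continuous.aestronglyMeasurable fun u hu => ?_
    have h2 := hG₀.dist_le_mul u x
    have h3 : dist u x < δ := hu
    simp only [NNReal.coe_one, one_mul] at h2
    linarith

/-- Strict differentiability: all difference quotients of `G` over short segments through `z` in
direction `e` are uniformly close to `G'(z) e`. -/
theorem exists_quot_near {d : ℕ} {G : EuclideanSpace ℝ (Fin d) → ℝ} (hG : ContDiff ℝ 1 G)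
    (z : EuclideanSpace ℝ (Fin d)) {η : ℝ} (hη : 0 < η) :
    ∃ ε > 0, ∀ e ∈ sphere (0 : EuclideanSpace ℝ (Fin d)) 1, ∀ x t, Adm z ε e x t →
      |quot (fun w => G w) e x t - fderiv ℝ G z e| ≤ η := by
  have hs : HasStrictFDerivAt G (fderiv ℝ G z) z :=
    hG.contDiffAt.hasStrictFDerivAt (by norm_num)
  have hb := hs.isLittleO.bound hη
  obtain ⟨r, hr, hball⟩ := Metric.eventually_nhds_iff.1 hb
  refine ⟨r / 2, by positivity, fun e he x t h => ?_⟩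
  have he' : ‖e‖ = 1 := by simpa using he
  have htr : |t| < r := by linarith [abs_le.2 h.mem]
  have hd : ∀ p ∈ segment ℝ x (x + t • e), dist p z < r := by
    intro p hp
    have h1 : dist p z ≤ dist x (x + t • e) := by
      rw [← convexHull_pair] at hp
      have hz := h.seg
      rw [← convexHull_pair] at hz
      refine (dist_le_diam_of_mem (isBounded_convexHull.2 ?_) hp hz).trans_eq ?_
      · exact (Set.toFinite _).isBounded
      · rw [convexHull_diam, diam_pair]
    simp only [dist_self_add_right, norm_smul, he', mul_one, Real.norm_eq_abs] at h1
    linarith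
  have h2 := hball (y := (x + t • e, x)) (by
    rw [Prod.dist_eq]
    exact max_lt (hd _ (right_mem_segment ..)) (hd _ (left_mem_segment ..)))
  simp only [add_sub_cancel_left, norm_smul, he', mul_one, Real.norm_eq_abs, map_smul,
    smul_eq_mul] at h2
  unfold quot extC
  rw [dif_pos h.left, dif_pos h.right, div_sub' h.ne, abs_div]
  exact div_le_of_le_mul₀ (abs_nonneg _) hη.le h2

theorem Wit.add_smooth {d : ℕ} {h : cube d → ℝ} {G : EuclideanSpace ℝ (Fin d) → ℝ}
    (hG : ContDiff ℝ 1 G) {z : EuclideanSpace ℝ (Fin d)} {ε c c' : ℝ} (hε : 0 < ε) (hc : c < c')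
    (hW : ∀ ε > 0, Wit h z ε c') : Wit (fun w => h w + G w) z ε c := by
  obtain ⟨r, hr, hq⟩ := exists_quot_near hG z (η := (c' - c) / 2) (by linarith)
  obtain ⟨e, he, x, y, s, t, hx, hy, hlt⟩ := hW (min ε r) (lt_min hε hr)
  refine ⟨e, he, x, y, s, t, hx.mono (min_le_left _ _), hy.mono (min_le_left _ _), ?_⟩
  have h1 := hq e he x t (hx.mono (min_le_right _ _))
  have h2 := hq e he y s (hy.mono (min_le_right _ _))
  have hadd : ∀ x t, Adm z (min ε r) e x t → quot (fun w => h w + G w) e x t =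
      quot h e x t + quot (fun w => G w) e x t := by
    intro x t hx
    unfold quot extC
    simp only [dif_pos hx.left, dif_pos hx.right]
    ring
  rw [hadd x t hx, hadd y s hy]
  set A := quot h e x t
  set B := quot h e y s
  set C := quot (fun w : cube d => G w) e x t
  set D := quot (fun w : cube d => G w) e y s
  have h3 : |C - D| ≤ c' - c := by
    rw [abs_le] at *
    constructor <;> linarith
  have h4 : |A - B| ≤ |A + C - (B + D)| + |C - D| := by
    have := abs_sub (A + C - (B + D)) (C - D)
    rwa [show A + C - (B + D) - (C - D) = A - B by ring] at this
  linarith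

/-! ### Category -/

/-- Only the scale `ε` and the threshold `c` are kept for `h + g`: the loss from `c'` to `c` makes
the set of such `g` dense, and compactness of `F` makes it open. -/
theorem wit_mem_residual {d : ℕ} {F : Set (EuclideanSpace ℝ (Fin d))} (hF : IsCompact F)
    (hFc : F ⊆ cube d) {h : cube d → ℝ} (hc : Continuous h) {ε c c' : ℝ} (hε : 0 < ε)
    (hcc : c < c') (hW : ∀ z ∈ F, ∀ ε > 0, Wit h z ε c') :
    {g : {g : C(cube d, ℝ) // LipschitzWith 1 ⇑g} |
      ∀ z ∈ F, Wit (fun w => h w + g.1 w) z ε c} ∈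
      residual {g : C(cube d, ℝ) // LipschitzWith 1 ⇑g} := by
  have : CompactSpace (cube d) := isCompact_iff_compactSpace.1 (isCompact_cube d)
  refine residual_of_dense_open ?_ ?_
  · rw [isOpen_iff_mem_nhds]
    intro g₀ hg₀
    have := hF.eventually_forall_of_forall_eventually (x₀ := g₀)
      (P := fun g z => z ∈ cube d → Wit (fun w => h w + g.1 w) z ε c)
      (fun z hz => eventually_wit hc g₀ (hFc hz) (hg₀ z hz))
    filter_upwards [this] with g hg z hz using hg z hz (hFc hz)
  · rw [Metric.dense_iff]
    intro g δ hδ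
    obtain ⟨G, hG, hGL, hGg⟩ := exists_smooth_near g.2 (half_pos hδ)
    refine ⟨⟨⟨fun w => G w, hG.continuous.comp continuous_subtype_val⟩,
      by simpa [Function.comp_def] using hGL.comp (LipschitzWith.subtype_val (cube d))⟩, ?_, ?_⟩
    · rw [Metric.mem_ball, Subtype.dist_eq]
      refine lt_of_le_of_lt ?_ (half_lt_self hδ)
      rw [ContinuousMap.dist_le (half_pos hδ).le]
      exact hGg
    · intro z hz
      exact Wit.add_smooth hG hε hcc (hW z hz)

/-- If `K ⊆ [0,1]^d` is `F_σ`, `σ > 0`, and `h : [0,1]^d → ℝ` is Lipschitz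
with `limsup_{ε→0} Υ(h,z,ε) ≥ σ` for all `z ∈ K`, then the typical
`g ∈ Lip₁([0,1]^d)` satisfies `limsup_{ε→0} Υ(h+g,z,ε) ≥ σ` for all `z ∈ K`. -/
theorem stmt4 (d : ℕ) (K : Set (EuclideanSpace ℝ (Fin d))) (hK : K ⊆ cube d)
    (hFσ : ∃ F : ℕ → Set (EuclideanSpace ℝ (Fin d)),
      (∀ n, IsClosed (F n)) ∧ K = ⋃ n, F n)
    (σ : ℝ) (hσ : 0 < σ) (h : cube d → ℝ) (hLip : ∃ M, LipschitzWith M h)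
    (hh : ∀ z ∈ K, σ ≤ Filter.limsup (fun ε => UpsC h z ε) (𝓝[>] (0:ℝ))) :
    {g : {g : C(cube d, ℝ) // LipschitzWith 1 ⇑g} |
        ∀ z ∈ K, σ ≤ Filter.limsup
          (fun ε => UpsC (fun w => h w + g.1 w) z ε) (𝓝[>] (0:ℝ))}
      ∈ residual {g : C(cube d, ℝ) // LipschitzWith 1 ⇑g} := by
  obtain ⟨F, hFcl, rfl⟩ := hFσ
  obtain ⟨M, hM⟩ := hLip
  obtain ⟨u, -, huI, hu⟩ := exists_seq_strictMono_tendsto' hσ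
  have hFc : ∀ n, F n ⊆ cube d := fun n => (Set.subset_iUnion F n).trans hK
  have hres : ∀ n m k : ℕ, ∀ᶠ g in residual {g : C(cube d, ℝ) // LipschitzWith 1 ⇑g},
      ∀ z ∈ F n, Wit (fun w => h w + g.1 w) z (1 / ((k : ℝ) + 1)) (u m) := by
    intro n m k
    obtain ⟨c', hc1, hc2⟩ := exists_between (huI m).2
    refine wit_mem_residual ((isCompact_cube d).of_isClosed_subset (hFcl n) (hFc n)) (hFc n)
      hM.continuous Nat.one_div_pos_of_nat hc1 fun z hz ε hε => ?_
    exact (le_limsup_iff_wit hM).1 (hh z (Set.mem_iUnion_of_mem n hz)) ε hε c'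
      ((huI m).1.trans hc1) hc2
  have hall := eventually_countable_forall.2 fun n => eventually_countable_forall.2 fun m =>
    eventually_countable_forall.2 fun k => hres n m k
  filter_upwards [hall] with g hg z hz
  obtain ⟨n, hn⟩ := Set.mem_iUnion.1 hz
  refine (le_limsup_iff_wit (hM.add g.2)).2 fun ε hε c _ hcσ => ?_
  obtain ⟨m, hm⟩ := (hu.eventually (lt_mem_nhds hcσ)).exists
  obtain ⟨k, hk⟩ := exists_nat_one_div_lt hε
  obtain ⟨e, he, x, y, s, t, hx, hy, hlt⟩ := hg n m k z hn
  exact ⟨e, he, x, y, s, t, hx.mono hk.le, hy.mono hk.le, hm.trans hlt⟩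

end
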